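/- Let G be a group and A ⊆ G a nonempty finite set. Let d = VC^ℓ_{A⁻¹}(A), k = |A⁻¹A|/|A|, and m = |AA⁻¹|/|A|, and assume d ≥ 1. Then for any integers n ≥ u ≥ 2 and any ε ∈ (0,1), there is a symmetric set B ⊆ G such that |B^u| ≤ u^{d(d+1)}|B|, B^n ⊆ St^ℓ_ε(A), and |A| ≤ m^{1/d}(30kn/ε)^{d+1}|B|. -/

import Mathlib

open scoped Pointwise symmDiff

/-- `Stab^ℓ_N(A) = {x : |xA △ A| ≤ N}`. -/
def stabL {G : Type*} [Group G] (A : Set G) (N : ℝ) : Set G :=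
  {x : G | (((x • A) ∆ A).ncard : ℝ) ≤ N}

/-- `Stab^r_N(A) = {x : |Ax △ A| ≤ N}`. -/
def stabR {G : Type*} [Group G] (A : Set G) (N : ℝ) : Set G :=
  {x : G | (((A * {x}) ∆ A).ncard : ℝ) ≤ N}

/-- `St^ℓ_ε(A) = Stab^ℓ_{ε|A|}(A)`. -/
def stL {G : Type*} [Group G] (A : Set G) (ε : ℝ) : Set G := stabL A (ε * A.ncard)

/-- `St^r_ε(A) = Stab^r_{ε|A|}(A)`. -/
def stR {G : Type*} [Group G] (A : Set G) (ε : ℝ) : Set G := stabR A (ε * A.ncard)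

/-- A family of sets shatters `S` if every subset of `S` is cut out by a member of the family. -/
def Shatters {α : Type*} (F : Set (Set α)) (S : Set α) : Prop :=
  ∀ T ⊆ S, ∃ f ∈ F, S ∩ f = T

/-- VC-dimension of a set system: the supremum of cardinalities of finite shattered sets. -/
noncomputable def vcDim {α : Type*} (F : Set (Set α)) : ℕ∞ :=
  ⨆ (S : Finset α) (_ : Shatters F ↑S), (S.card : ℕ∞)

/-- The family of left translates `{xA : x ∈ B}`. -/
def leftFam {G : Type*} [Group G] (A B : Set G) : Set (Set G) := (fun x => x • A) '' B

/-- The family of right translates `{Ax : x ∈ B}`. -/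
def rightFam {G : Type*} [Group G] (A B : Set G) : Set (Set G) := (fun x => A * {x}) '' B

/-- `Z^ℓ_ε(A,X) = {g : min(|gX ∩ A|, |gX \ A|) ≥ ε|X|}`. -/
def Zl {G : Type*} [Group G] (A X : Set G) (ε : ℝ) : Set G :=
  {g : G | ε * X.ncard ≤ min (((g • X) ∩ A).ncard : ℝ) (((g • X) \ A).ncard : ℝ)}

/-!
The stabilizers at scale `δ` are large. If `a⁻¹A` and `b⁻¹A` differ in at most `δ|A|` points then
`ab⁻¹ ∈ St_δ(A)`, so a maximal family of pairwise `δ|A|`-separated translates `a⁻¹A ⊆ A⁻¹A` yields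
a cover of `A` by as many right translates of `St_δ(A)`. Haussler's packing lemma bounds the size
of such a family, whence `|A| ≤ (30k/δ)^d |St_δ(A)|`. Haussler's lemma itself is proved by counting
edges in the one-inclusion graph of the traces on a random sample: there are few edges because the
VC-dimension is small, and many because separated sets with the same trace on all sampled points
but one are likely to be told apart by the last one.

Let `η = εu/n` and `B_t = St_{η/u^t}(A)`. Since `B_{t+1}^u ⊆ B_t` and `B_{t+1}^n ⊆ St_ε(A)`, it
remains to choose `t`. Take the first `t` with `|B_t| ≤ u^{d(d+1)} |B_{t+1}|`. By minimality
`u^{d(d+1)t} |B_t| ≤ |B_0| ≤ m|A|`, and comparing with the lower bound on `|B_t|` gives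
`u^{dt} ≤ m^{1/d} 30k/η`, which turns the lower bound on `|B_{t+1}|` into the required one.
-/

theorem min_add_min_le_min_sup_add_min_inf {M : Type*} [AddCommMonoid M] [LinearOrder M]
    [IsOrderedAddMonoid M] (a b c e : M) :
    min a c + min b e ≤ min (a ⊔ b) (c ⊔ e) + min (a ⊓ b) (c ⊓ e) := by
  rw [← max_add_min (min a c) (min b e), inf_inf_inf_comm]
  gcongr
  exact max_le (inf_le_inf le_sup_left le_sup_left) (inf_le_inf le_sup_right le_sup_right)

section OneInclusionGraph

open Finset

variable {ι M : Type*} [AddCommMonoid M] [LinearOrder M] {T : Finset ι}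
  {w : Finset ι → M} {x i : ι}

/-- The set family carrying the weight `w` on the cube of subsets of `T`. -/
def weightSupport (T : Finset ι) (w : Finset ι → M) : Finset (Finset ι) :=
  {q ∈ T.powerset | w q ≠ 0}

theorem mem_weightSupport {q : Finset ι} : q ∈ weightSupport T w ↔ q ⊆ T ∧ w q ≠ 0 := by
  simp only [weightSupport, mem_filter, mem_powerset]

variable [DecidableEq ι]

/-- The weight of the edges `{q, insert i q}` in direction `i` of the cube of subsets of `T`, an
edge weighing as much as its lighter endpoint. If `w` is the indicator of a set family, these are
the edges of its one-inclusion graph. -/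
def edgeWeight (T : Finset ι) (w : Finset ι → M) (i : ι) : M :=
  ∑ q ∈ (T.erase i).powerset, min (w q) (w (insert i q))

theorem edgeWeight_insert_le [IsOrderedAddMonoid M] (hx : x ∉ T) (hi : i ∈ T) :
    edgeWeight (insert x T) w i ≤
      edgeWeight T (w ⊔ w ∘ insert x) i + edgeWeight T (w ⊓ w ∘ insert x) i := by
  simp only [edgeWeight]
  rw [erase_insert_of_ne (ne_of_mem_of_not_mem hi hx).symm,
    sum_powerset_insert (mt mem_of_mem_erase hx), ← sum_add_distrib, ← sum_add_distrib]
  refine sum_le_sum fun q _ => ?_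
  rw [insert_comm i x q]
  exact min_add_min_le_min_sup_add_min_inf _ _ _ _

theorem notMem_of_weightSupport_shatters {S : Finset ι} (hx : x ∉ T)
    (hS : (weightSupport T w).Shatters S) : x ∉ S := by
  obtain ⟨q, hq, hSq⟩ := hS.exists_superset
  exact fun hxS => hx ((mem_weightSupport.mp hq).1 (hSq hxS))

theorem weightSupport_shatters_of_sup {S : Finset ι} (hx : x ∉ T)
    (hS : (weightSupport T (w ⊔ w ∘ insert x)).Shatters S) :
    (weightSupport (insert x T) w).Shatters S := by
  intro U hU
  obtain ⟨q, hq, hqU⟩ := hS hU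
  obtain ⟨hqT, hwq⟩ := mem_weightSupport.mp hq
  by_cases h0 : w q = 0
  · refine ⟨insert x q, mem_weightSupport.mpr ⟨insert_subset_insert x hqT, fun h1 => hwq ?_⟩, ?_⟩
    · simp only [Pi.sup_apply, Function.comp_apply, h0, h1, max_self]
    · rw [inter_insert_of_notMem (notMem_of_weightSupport_shatters hx hS), hqU]
  · exact ⟨q, mem_weightSupport.mpr ⟨hqT.trans (subset_insert x T), h0⟩, hqU⟩

theorem vcDim_weightSupport_sup_le (hx : x ∉ T) :
    (weightSupport T (w ⊔ w ∘ insert x)).vcDim ≤ (weightSupport (insert x T) w).vcDim :=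
  Finset.sup_le fun _ hS =>
    (weightSupport_shatters_of_sup hx (mem_shatterer.mp hS)).card_le_vcDim

variable [CanonicallyOrderedAdd M]

theorem weightSupport_shatters_insert_of_inf {S : Finset ι} (hx : x ∉ T)
    (hS : (weightSupport T (w ⊓ w ∘ insert x)).Shatters S) :
    (weightSupport (insert x T) w).Shatters (insert x S) := by
  intro U hU
  obtain ⟨q, hq, hqU⟩ := hS (subset_insert_iff.mp hU)
  obtain ⟨hqT, hwq⟩ := mem_weightSupport.mp hq
  have hxq : x ∉ q := fun h => hx (hqT h)
  obtain ⟨hq0, hq1⟩ : w q ≠ 0 ∧ w (insert x q) ≠ 0 := by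
    simpa only [Pi.inf_apply, Function.comp_apply, ← pos_iff_ne_zero, lt_min_iff] using hwq
  by_cases hxU : x ∈ U
  · refine ⟨insert x q, mem_weightSupport.mpr ⟨insert_subset_insert x hqT, hq1⟩, ?_⟩
    rw [← insert_inter_distrib, hqU, insert_erase hxU]
  · refine ⟨q, mem_weightSupport.mpr ⟨hqT.trans (subset_insert x T), hq0⟩, ?_⟩
    rw [insert_inter_of_notMem hxq, hqU, erase_eq_of_notMem hxU]

theorem vcDim_weightSupport_inf_lt (hx : x ∉ T)
    (hne : (weightSupport T (w ⊓ w ∘ insert x)).Nonempty) :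
    (weightSupport T (w ⊓ w ∘ insert x)).vcDim < (weightSupport (insert x T) w).vcDim := by
  obtain ⟨S, hS, hcard⟩ := exists_mem_eq_sup _ ⟨∅, mem_shatterer.mpr (shatters_empty.mpr hne)⟩ card
  rw [mem_shatterer] at hS
  rw [Finset.vcDim, hcard, ← Nat.succ_le_iff, Nat.succ_eq_add_one,
    ← card_insert_of_notMem (notMem_of_weightSupport_shatters hx hS)]
  exact (weightSupport_shatters_insert_of_inf hx hS).card_le_vcDim

theorem sum_edgeWeight_le [IsOrderedAddMonoid M] (T : Finset ι) (w : Finset ι → M) :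
    ∑ i ∈ T, edgeWeight T w i ≤ (weightSupport T w).vcDim • ∑ q ∈ T.powerset, w q := by
  induction T using Finset.induction_on generalizing w with
  | empty => simp only [sum_empty, zero_le]
  | insert x T hx ih =>
    set d := (weightSupport (insert x T) w).vcDim
    set v := w ⊔ w ∘ insert x
    set u := w ⊓ w ∘ insert x
    have sum_split : ∑ q ∈ (insert x T).powerset, w q
        = ∑ q ∈ T.powerset, v q + ∑ q ∈ T.powerset, u q := by
      rw [sum_powerset_insert hx, ← sum_add_distrib, ← sum_add_distrib]
      exact sum_congr rfl fun q _ => (max_add_min _ _).symm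
    have bound_sup : ∑ i ∈ T, edgeWeight T v i ≤ d • ∑ q ∈ T.powerset, v q :=
      (ih v).trans (nsmul_le_nsmul_left zero_le (vcDim_weightSupport_sup_le hx))
    have bound_inf : ∑ q ∈ T.powerset, u q + ∑ i ∈ T, edgeWeight T u i
        ≤ d • ∑ q ∈ T.powerset, u q := by
      refine (add_le_add_right (ih u) _).trans ?_
      rcases (weightSupport T u).eq_empty_or_nonempty with hempty | hne
      · have hzero : ∑ q ∈ T.powerset, u q = 0 := sum_eq_zero fun q hq => by
          simpa using filter_eq_empty_iff.mp hempty hq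
        simp only [hzero, smul_zero, add_zero, le_refl]
      · rw [← succ_nsmul']
        exact nsmul_le_nsmul_left zero_le (vcDim_weightSupport_inf_lt hx hne)
    calc ∑ i ∈ insert x T, edgeWeight (insert x T) w i
        = ∑ q ∈ T.powerset, u q + ∑ i ∈ T, edgeWeight (insert x T) w i := by
          rw [sum_insert hx, edgeWeight, erase_insert hx]; rfl
      _ ≤ ∑ q ∈ T.powerset, u q + ∑ i ∈ T, (edgeWeight T v i + edgeWeight T u i) := by
          gcongr with i hi
          exact edgeWeight_insert_le hx hi
      _ = ∑ i ∈ T, edgeWeight T v i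
            + (∑ q ∈ T.powerset, u q + ∑ i ∈ T, edgeWeight T u i) := by
          rw [sum_add_distrib, add_left_comm]
      _ ≤ d • ∑ q ∈ (insert x T).powerset, w q := by
          rw [sum_split, nsmul_add]
          exact add_le_add bound_sup bound_inf

end OneInclusionGraph

section SampleTrace

open Finset

variable {ι α : Type*} [Fintype ι] [DecidableEq α]

/-- The trace of a set `t` on a sample `a`, recorded as a set of indices, so that samples with
repetitions are allowed. -/
def sampleTrace (a : ι → α) (t : Finset α) : Finset ι := {i | a i ∈ t}

@[simp]
theorem mem_sampleTrace {a : ι → α} {t : Finset α} {i : ι} : i ∈ sampleTrace a t ↔ a i ∈ t := by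
  simp only [sampleTrace, mem_filter, mem_univ, true_and]

variable [DecidableEq ι]

theorem sampleTrace_update (a : ι → α) (t : Finset α) (i : ι) (x : α) :
    sampleTrace (Function.update a i x) t =
      if x ∈ t then insert i ((sampleTrace a t).erase i) else (sampleTrace a t).erase i := by
  ext j
  rcases eq_or_ne j i with rfl | hji <;> split_ifs with hxt <;> simp [*]

/-- The number of members of `𝒜` with a given trace on the sample `a`. -/
def traceCount (𝒜 : Finset (Finset α)) (a : ι → α) (q : Finset ι) : ℕ :=
  #{t ∈ 𝒜 | sampleTrace a t = q}

variable {𝒜 : Finset (Finset α)} {a : ι → α}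

theorem injOn_of_image_sampleTrace_shatters {S : Finset ι}
    (hS : (𝒜.image (sampleTrace a)).Shatters S) : Set.InjOn a S := by
  intro i hi j hj hij
  obtain ⟨q, hq, hSq⟩ := hS.exists_inter_eq_singleton hi
  obtain ⟨t, -, rfl⟩ := mem_image.mp hq
  have mem_iff (l : ι) : l ∈ S ∧ a l ∈ t ↔ l = i := by
    rw [← mem_singleton, ← hSq, mem_inter, mem_sampleTrace]
  exact ((mem_iff j).mp ⟨hj, hij ▸ ((mem_iff i).mpr rfl).2⟩).symm

theorem shatters_image_of_image_sampleTrace_shatters {S : Finset ι}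
    (hS : (𝒜.image (sampleTrace a)).Shatters S) : 𝒜.Shatters (S.image a) := by
  intro U hU
  obtain ⟨q, hq, hSq⟩ := hS (filter_subset (a · ∈ U) S)
  obtain ⟨t, ht, rfl⟩ := mem_image.mp hq
  have mem_iff {i : ι} (hi : i ∈ S) : a i ∈ t ↔ a i ∈ U := by
    simpa only [mem_inter, mem_filter, mem_sampleTrace, hi, true_and] using
      Finset.ext_iff.mp hSq i
  refine ⟨t, ht, ext fun x => ?_⟩
  rw [mem_inter]
  constructor
  · rintro ⟨hx, hxt⟩
    obtain ⟨i, hi, rfl⟩ := mem_image.mp hx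
    exact (mem_iff hi).mp hxt
  · intro hxU
    obtain ⟨i, hi, rfl⟩ := mem_image.mp (hU hxU)
    exact ⟨hU hxU, (mem_iff hi).mpr hxU⟩

theorem vcDim_image_sampleTrace_le (𝒜 : Finset (Finset α)) (a : ι → α) :
    (𝒜.image (sampleTrace a)).vcDim ≤ 𝒜.vcDim := by
  refine Finset.sup_le fun S hS => ?_
  rw [mem_shatterer] at hS
  rw [← card_image_of_injOn (injOn_of_image_sampleTrace_shatters hS)]
  exact (shatters_image_of_image_sampleTrace_shatters hS).card_le_vcDim

theorem card_image_sampleTrace_le (𝒜 : Finset (Finset α)) (a : ι → α) :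
    #(𝒜.image (sampleTrace a)) ≤ ∑ k ∈ Iic 𝒜.vcDim, (Fintype.card ι).choose k :=
  calc #(𝒜.image (sampleTrace a))
      ≤ ∑ k ∈ Iic (𝒜.image (sampleTrace a)).vcDim, (Fintype.card ι).choose k :=
        (card_le_card_shatterer _).trans card_shatterer_le_sum_vcDim
    _ ≤ ∑ k ∈ Iic 𝒜.vcDim, (Fintype.card ι).choose k :=
        sum_le_sum_of_subset (Iic_subset_Iic.mpr (vcDim_image_sampleTrace_le 𝒜 a))

theorem weightSupport_traceCount (𝒜 : Finset (Finset α)) (a : ι → α) :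
    weightSupport univ (traceCount 𝒜 a) = 𝒜.image (sampleTrace a) := by
  ext q
  simp only [mem_weightSupport, subset_univ, true_and, traceCount, ne_eq, card_eq_zero,
    filter_eq_empty_iff, not_forall, not_not, mem_image, exists_prop]

theorem sum_traceCount (𝒜 : Finset (Finset α)) (a : ι → α) :
    ∑ q ∈ (univ : Finset ι).powerset, traceCount 𝒜 a q = #𝒜 :=
  (card_eq_sum_card_fiberwise fun _ _ => mem_powerset.mpr (subset_univ _)).symm

theorem sum_edgeWeight_traceCount_le (𝒜 : Finset (Finset α)) (a : ι → α) :
    ∑ i, edgeWeight univ (traceCount 𝒜 a) i ≤ 𝒜.vcDim * #𝒜 := by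
  have h := sum_edgeWeight_le univ (traceCount 𝒜 a)
  rw [weightSupport_traceCount, sum_traceCount, smul_eq_mul] at h
  exact h.trans (Nat.mul_le_mul_right _ (vcDim_image_sampleTrace_le 𝒜 a))

/-- Fixing the trace off the index `i`, the two endpoints of an edge in direction `i` are the
members containing the point sampled at `i` and those avoiding it. -/
theorem sum_min_card_filter_le_edgeWeight (𝒜 : Finset (Finset α)) (a : ι → α) (i : ι) (x : α) :
    ∑ q ∈ 𝒜.image fun t => (sampleTrace a t).erase i,
        min #{t ∈ 𝒜 | (sampleTrace a t).erase i = q ∧ x ∉ t}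
          #{t ∈ 𝒜 | (sampleTrace a t).erase i = q ∧ x ∈ t} ≤
      edgeWeight univ (traceCount 𝒜 (Function.update a i x)) i := by
  have image_subset : (𝒜.image fun t => (sampleTrace a t).erase i) ⊆ (univ.erase i).powerset :=
    image_subset_iff.mpr fun t _ => mem_powerset.mpr (erase_subset_erase i (subset_univ _))
  refine (sum_le_sum fun q _ => ?_).trans (sum_le_sum_of_subset image_subset)
  refine min_le_min ?_ ?_ <;> refine card_le_card (monotone_filter_right 𝒜 ?_)
  · rintro t - ⟨rfl, hxt⟩
    rw [sampleTrace_update, if_neg hxt]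
  · rintro t - ⟨rfl, hxt⟩
    rw [sampleTrace_update, if_pos hxt]

end SampleTrace

section Packing

open Finset

theorem sum_piFinset_sum_update {ι α M : Type*} [Fintype ι] [DecidableEq ι] [AddCommMonoid M]
    (X : Finset α) (i : ι) (g : (ι → α) → M) :
    ∑ a ∈ Fintype.piFinset fun _ => X, ∑ x ∈ X, g (Function.update a i x) =
      #X • ∑ a ∈ Fintype.piFinset fun _ => X, g a := by
  have swap_involutive (p : (ι → α) × α) :
      (Function.update (Function.update p.1 i p.2) i (p.1 i), Function.update p.1 i p.2 i) = p := by
    simp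
  have swap_mem (p : (ι → α) × α) (hp : p ∈ (Fintype.piFinset fun _ => X) ×ˢ X) :
      (Function.update p.1 i p.2, p.1 i) ∈ (Fintype.piFinset fun _ => X) ×ˢ X := by
    simp only [mem_product, Fintype.mem_piFinset] at hp ⊢
    exact ⟨fun j => by by_cases h : j = i <;> simp [Function.update, h, hp], hp.1 i⟩
  calc ∑ a ∈ Fintype.piFinset fun _ => X, ∑ x ∈ X, g (Function.update a i x)
      = ∑ p ∈ (Fintype.piFinset fun _ => X) ×ˢ X, g (Function.update p.1 i p.2) :=
        (sum_product' ..).symm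
    _ = ∑ p ∈ (Fintype.piFinset fun _ => X) ×ˢ X, g p.1 :=
        sum_nbij' (fun p => (Function.update p.1 i p.2, p.1 i))
          (fun p => (Function.update p.1 i p.2, p.1 i)) swap_mem swap_mem
          (fun p _ => swap_involutive p) (fun p _ => swap_involutive p) fun _ _ => rfl
    _ = #X • ∑ a ∈ Fintype.piFinset fun _ => X, g a := by
        simp only [sum_product_right, sum_const]

variable {α : Type*} [DecidableEq α] {X : Finset α} {𝒞 : Finset (Finset α)}

theorem sum_sum_card_sdiff (h𝒞 : ∀ s ∈ 𝒞, s ⊆ X) :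
    ∑ s ∈ 𝒞, ∑ t ∈ 𝒞, #(s \ t) = ∑ x ∈ X, #{t ∈ 𝒞 | x ∉ t} * #{t ∈ 𝒞 | x ∈ t} := by
  have card_sdiff_eq (s : Finset α) (hs : s ∈ 𝒞) (t : Finset α) :
      #(s \ t) = ∑ x ∈ X, (if x ∉ t then 1 else 0) * if x ∈ s then 1 else 0 := by
    have sdiff_eq_filter : s \ t = {x ∈ X | x ∉ t ∧ x ∈ s} := by
      ext x
      rw [mem_sdiff, mem_filter]
      exact ⟨fun h => ⟨h𝒞 s hs h.1, h.2, h.1⟩, fun h => ⟨h.2.2, h.2.1⟩⟩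
    simp only [sdiff_eq_filter, card_filter, ite_zero_mul_ite_zero, mul_one]
  rw [sum_congr rfl fun s hs => sum_congr rfl fun t _ => card_sdiff_eq s hs t,
    sum_congr rfl fun s _ => sum_comm, sum_comm]
  simp only [← sum_mul, ← mul_sum, sum_boole, Nat.cast_id]

theorem sum_sum_card_symmDiff (h𝒞 : ∀ s ∈ 𝒞, s ⊆ X) :
    ∑ s ∈ 𝒞, ∑ t ∈ 𝒞, #(s ∆ t) = 2 * ∑ x ∈ X, #{t ∈ 𝒞 | x ∉ t} * #{t ∈ 𝒞 | x ∈ t} := by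
  have card_symmDiff_eq (s t : Finset α) : #(s ∆ t) = #(s \ t) + #(t \ s) :=
    card_union_of_disjoint disjoint_sdiff_sdiff
  simp only [card_symmDiff_eq, sum_add_distrib]
  rw [sum_comm (f := fun s t => #(t \ s)), sum_sum_card_sdiff h𝒞, two_mul]

theorem card_sub_one_mul_le_sum_min {δ : ℝ} (hδ : 0 ≤ δ) (h𝒞 : ∀ s ∈ 𝒞, s ⊆ X)
    (hsep : (𝒞 : Set (Finset α)).Pairwise fun s t => δ ≤ #(s ∆ t)) :
    (#𝒞 - 1) * δ ≤ 2 * ((∑ x ∈ X, min #{t ∈ 𝒞 | x ∉ t} #{t ∈ 𝒞 | x ∈ t} : ℕ) : ℝ) := by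
  rcases 𝒞.eq_empty_or_nonempty with rfl | hne
  · simpa using hδ
  have row_bound (s : Finset α) (hs : s ∈ 𝒞) : (#𝒞 - 1) * δ ≤ ∑ t ∈ 𝒞, (#(s ∆ t) : ℝ) :=
    calc (#𝒞 - 1) * δ = ∑ _t ∈ 𝒞.erase s, δ := by
          rw [sum_const, nsmul_eq_mul, card_erase_of_mem hs, Nat.cast_pred hne.card_pos]
      _ ≤ ∑ t ∈ 𝒞.erase s, (#(s ∆ t) : ℝ) := sum_le_sum fun t ht =>
          hsep hs (mem_of_mem_erase ht) (ne_of_mem_erase ht).symm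
      _ ≤ ∑ t ∈ 𝒞, (#(s ∆ t) : ℝ) :=
          sum_le_sum_of_subset_of_nonneg (erase_subset s 𝒞) fun _ _ _ => Nat.cast_nonneg _
  have mul_le_card_mul_min (x : α) : #{t ∈ 𝒞 | x ∉ t} * #{t ∈ 𝒞 | x ∈ t} ≤
      #𝒞 * min #{t ∈ 𝒞 | x ∉ t} #{t ∈ 𝒞 | x ∈ t} := by
    rw [← max_mul_min]
    gcongr
    exact max_le (card_filter_le _ _) (card_filter_le _ _)
  refine le_of_mul_le_mul_left ?_ (Nat.cast_pos.mpr hne.card_pos : (0 : ℝ) < #𝒞)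
  calc (#𝒞 : ℝ) * ((#𝒞 - 1) * δ) ≤ ∑ s ∈ 𝒞, ∑ t ∈ 𝒞, (#(s ∆ t) : ℝ) := by
        rw [← nsmul_eq_mul]
        exact card_nsmul_le_sum 𝒞 _ _ row_bound
    _ = 2 * ∑ x ∈ X, ((#{t ∈ 𝒞 | x ∉ t} * #{t ∈ 𝒞 | x ∈ t} : ℕ) : ℝ) := by
        exact_mod_cast sum_sum_card_symmDiff h𝒞
    _ ≤ 2 * ∑ x ∈ X, ((#𝒞 * min #{t ∈ 𝒞 | x ∉ t} #{t ∈ 𝒞 | x ∈ t} : ℕ) : ℝ) :=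
        mul_le_mul_of_nonneg_left
          (sum_le_sum fun x _ => Nat.cast_le.mpr (mul_le_card_mul_min x)) zero_le_two
    _ = #𝒞 * (2 * ((∑ x ∈ X, min #{t ∈ 𝒞 | x ∉ t} #{t ∈ 𝒞 | x ∈ t} : ℕ) : ℝ)) := by
        push_cast
        rw [← mul_sum]
        ring

variable {𝒜 : Finset (Finset α)} {δ : ℝ}

theorem card_sub_card_image_mul_le_sum_edgeWeight {ι : Type*} [Fintype ι] [DecidableEq ι]
    (hδ : 0 ≤ δ) (h𝒜 : ∀ t ∈ 𝒜, t ⊆ X)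
    (hsep : (𝒜 : Set (Finset α)).Pairwise fun s t => δ ≤ #(s ∆ t)) (a : ι → α) (i : ι) :
    (#𝒜 - #(𝒜.image (sampleTrace a))) * δ ≤
      2 * ((∑ x ∈ X, edgeWeight univ (traceCount 𝒜 (Function.update a i x)) i : ℕ) : ℝ) := by
  set r : Finset α → Finset ι := fun t => (sampleTrace a t).erase i
  have card_image_le_card : #(𝒜.image r) ≤ #(𝒜.image (sampleTrace a)) :=
    image_image (f := sampleTrace a) (g := (·.erase i)) ▸ card_image_le
  have class_bound (q : Finset ι) : (#{t ∈ 𝒜 | r t = q} - 1) * δ ≤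
      2 * ((∑ x ∈ X,
        min #{t ∈ 𝒜 | r t = q ∧ x ∉ t} #{t ∈ 𝒜 | r t = q ∧ x ∈ t} : ℕ) : ℝ) := by
    simpa only [filter_filter] using card_sub_one_mul_le_sum_min hδ
      (fun t ht => h𝒜 t (mem_of_mem_filter t ht)) (hsep.mono (filter_subset (r · = q) 𝒜))
  calc (#𝒜 - #(𝒜.image (sampleTrace a))) * δ
      ≤ (#𝒜 - #(𝒜.image r)) * δ := by gcongr
    _ = ∑ q ∈ 𝒜.image r, (#{t ∈ 𝒜 | r t = q} - 1) * δ := by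
        rw [← sum_mul, sum_sub_distrib, ← Nat.cast_sum, ← card_eq_sum_card_image, sum_const,
          nsmul_one]
    _ ≤ ∑ q ∈ 𝒜.image r, 2 * ((∑ x ∈ X,
          min #{t ∈ 𝒜 | r t = q ∧ x ∉ t} #{t ∈ 𝒜 | r t = q ∧ x ∈ t} : ℕ) : ℝ) :=
        sum_le_sum fun q _ => class_bound q
    _ = 2 * ((∑ x ∈ X, ∑ q ∈ 𝒜.image r,
          min #{t ∈ 𝒜 | r t = q ∧ x ∉ t} #{t ∈ 𝒜 | r t = q ∧ x ∈ t} : ℕ) : ℝ) := by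
        rw [← mul_sum, ← Nat.cast_sum, sum_comm]
    _ ≤ 2 * ((∑ x ∈ X, edgeWeight univ (traceCount 𝒜 (Function.update a i x)) i : ℕ) : ℝ) := by
        gcongr with x
        exact sum_min_card_filter_le_edgeWeight 𝒜 a i x

theorem mul_card_sub_sum_choose_mul_le (hδ : 0 ≤ δ) (hX : X.Nonempty) (h𝒜 : ∀ t ∈ 𝒜, t ⊆ X)
    (hsep : (𝒜 : Set (Finset α)).Pairwise fun s t => δ ≤ #(s ∆ t)) (n : ℕ) :
    n * ((#𝒜 - ∑ k ∈ Iic 𝒜.vcDim, (n.choose k : ℝ)) * δ) ≤ 2 * #X * (𝒜.vcDim * #𝒜) := by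
  set P : ℝ := ∑ k ∈ Iic 𝒜.vcDim, (n.choose k : ℝ) with hP
  set Ω : Finset (Fin n → α) := Fintype.piFinset fun _ => X
  have hΩ : (0 : ℝ) < #Ω := Nat.cast_pos.mpr (Fintype.piFinset_nonempty.mpr fun _ => hX).card_pos
  have card_image_le (a : Fin n → α) : (#(𝒜.image (sampleTrace a)) : ℝ) ≤ P := by
    rw [hP, ← Nat.cast_sum]
    have h := card_image_sampleTrace_le 𝒜 a
    rw [Fintype.card_fin] at h
    exact Nat.cast_le.mpr h
  set W : (Fin n → α) → Fin n → ℕ := fun a i => edgeWeight univ (traceCount 𝒜 a) i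
  have direction_bound (i : Fin n) : #Ω * ((#𝒜 - P) * δ) ≤ 2 * #X * ((∑ a ∈ Ω, W a i : ℕ) : ℝ) :=
    calc #Ω * ((#𝒜 - P) * δ) = ∑ _a ∈ Ω, (#𝒜 - P) * δ := by rw [sum_const, nsmul_eq_mul]
      _ ≤ ∑ a ∈ Ω, 2 * ((∑ x ∈ X, W (Function.update a i x) i : ℕ) : ℝ) := by
          refine sum_le_sum fun a _ =>
            le_trans ?_ (card_sub_card_image_mul_le_sum_edgeWeight hδ h𝒜 hsep a i)
          gcongr
          exact card_image_le a
      _ = 2 * #X * ∑ a ∈ Ω, W a i := by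
          rw [← mul_sum, ← Nat.cast_sum, sum_piFinset_sum_update X i (W · i), smul_eq_mul,
            Nat.cast_mul, mul_assoc]
  refine le_of_mul_le_mul_left ?_ hΩ
  calc #Ω * (n * ((#𝒜 - P) * δ)) = ∑ _i : Fin n, #Ω * ((#𝒜 - P) * δ) := by
        rw [sum_const, card_univ, Fintype.card_fin, nsmul_eq_mul, mul_left_comm]
    _ ≤ ∑ i, 2 * #X * ((∑ a ∈ Ω, W a i : ℕ) : ℝ) := sum_le_sum fun i _ => direction_bound i
    _ = 2 * #X * ((∑ a ∈ Ω, ∑ i, W a i : ℕ) : ℝ) := by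
        rw [← mul_sum, ← Nat.cast_sum, sum_comm]
    _ ≤ 2 * #X * ((∑ _a ∈ Ω, 𝒜.vcDim * #𝒜 : ℕ) : ℝ) := by
        gcongr with a
        exact sum_edgeWeight_traceCount_le 𝒜 a
    _ = #Ω * (2 * #X * (𝒜.vcDim * #𝒜)) := by
        rw [sum_const, smul_eq_mul, Nat.cast_mul, Nat.cast_mul, mul_left_comm]

theorem sum_choose_le_exp_mul_div_pow {d n : ℕ} (hdn : d ≤ n) :
    ∑ k ∈ Iic d, (n.choose k : ℝ) ≤ (Real.exp 1 * n / d) ^ d := by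
  rcases d.eq_zero_or_pos with rfl | hd
  · simp [show Iic 0 = {0} from rfl]
  have hn : (0 : ℝ) < n := Nat.cast_pos.mpr (hd.trans_le hdn)
  have ratio_le_one : (d / n : ℝ) ≤ 1 := div_le_one_of_le₀ (Nat.cast_le.mpr hdn) hn.le
  have weighted_sum_le : (∑ k ∈ Iic d, (n.choose k : ℝ)) * (d / n : ℝ) ^ d ≤ Real.exp 1 ^ d :=
    calc (∑ k ∈ Iic d, (n.choose k : ℝ)) * (d / n : ℝ) ^ d
        ≤ ∑ k ∈ Iic d, (d / n : ℝ) ^ k * n.choose k := by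
          rw [sum_mul]
          refine sum_le_sum fun k hk => ?_
          rw [mul_comm]
          gcongr ?_ * _
          exact pow_le_pow_of_le_one (by positivity) ratio_le_one (mem_Iic.mp hk)
      _ ≤ ∑ k ∈ range (n + 1), (d / n : ℝ) ^ k * n.choose k :=
          sum_le_sum_of_subset_of_nonneg
            (fun k hk => mem_range_succ_iff.mpr ((mem_Iic.mp hk).trans hdn))
            fun _ _ _ => by positivity
      _ = (d / n + 1 : ℝ) ^ n := by simp only [add_pow, one_pow, mul_one]
      _ ≤ Real.exp (d / n) ^ n := by
          gcongr
          exact Real.add_one_le_exp _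
      _ = Real.exp 1 ^ d := by
          rw [← Real.exp_nat_mul, ← Real.exp_nat_mul, mul_div_cancel₀ _ hn.ne', mul_one]
  calc ∑ k ∈ Iic d, (n.choose k : ℝ) ≤ Real.exp 1 ^ d / (d / n : ℝ) ^ d :=
        (le_div_iff₀ (by positivity)).mpr weighted_sum_le
    _ = (Real.exp 1 * n / d) ^ d := by rw [← div_pow, div_div_eq_mul_div]

theorem exists_four_mul_le_and_sum_choose_le {d : ℕ} (hd : 0 < d) {ρ : ℝ} (hρ : 1 ≤ ρ) :
    ∃ n : ℕ, 0 < n ∧ 4 * d * ρ ≤ n ∧ ∑ k ∈ Iic d, (n.choose k : ℝ) ≤ (15 * ρ) ^ d := by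
  have hd1 : (1 : ℝ) ≤ d := Nat.one_le_cast.mpr hd
  have d_le_mul : (d : ℝ) ≤ d * ρ := le_mul_of_one_le_right d.cast_nonneg hρ
  obtain ⟨n, le_n, n_le⟩ : ∃ n : ℕ, 4 * d * ρ ≤ n ∧ n ≤ 5 * d * ρ :=
    ⟨_, Nat.le_ceil _, (Nat.ceil_lt_add_one (by positivity)).le.trans (by linarith)⟩
  have d_le_n : d ≤ n := Nat.cast_le.mp (by linarith : (d : ℝ) ≤ n)
  refine ⟨n, hd.trans_le d_le_n, le_n, ?_⟩
  calc ∑ k ∈ Iic d, (n.choose k : ℝ) ≤ (Real.exp 1 * n / d) ^ d :=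
        sum_choose_le_exp_mul_div_pow d_le_n
    _ ≤ (3 * (5 * d * ρ) / d) ^ d := by
        gcongr
        exact Real.exp_one_lt_three.le
    _ = (15 * ρ) ^ d := by
        field_simp
        ring

theorem card_le_two_mul_sum_choose (hδ : 0 < δ) (hX : X.Nonempty) (h𝒜 : ∀ t ∈ 𝒜, t ⊆ X)
    (hsep : (𝒜 : Set (Finset α)).Pairwise fun s t => δ ≤ #(s ∆ t)) {n : ℕ} (hn0 : 0 < n)
    (hn : 4 * 𝒜.vcDim * #X ≤ n * δ) :
    (#𝒜 : ℝ) ≤ 2 * ∑ k ∈ Iic 𝒜.vcDim, (n.choose k : ℝ) := by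
  have packing := mul_card_sub_sum_choose_mul_le hδ.le hX h𝒜 hsep n
  have card_mul_le := mul_le_mul_of_nonneg_right hn (Nat.cast_nonneg (α := ℝ) #𝒜)
  have : (0 : ℝ) < n * δ := by positivity
  nlinarith

/-- **Haussler's packing lemma**. -/
theorem card_le_of_pairwise_le_card_symmDiff (hδ : 0 < δ) (hδX : δ ≤ #X) (h𝒜 : ∀ t ∈ 𝒜, t ⊆ X)
    (hsep : (𝒜 : Set (Finset α)).Pairwise fun s t => δ ≤ #(s ∆ t)) :
    (#𝒜 : ℝ) ≤ (30 * (#X / δ)) ^ 𝒜.vcDim := by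
  have hX : X.Nonempty := card_pos.mp (Nat.cast_pos.mp (hδ.trans_le hδX))
  rcases 𝒜.vcDim.eq_zero_or_pos with hd | hd
  · have packing := mul_card_sub_sum_choose_mul_le hδ.le hX h𝒜 hsep 1
    have sum_eq_one : ∑ k ∈ Iic 0, (Nat.choose 1 k : ℝ) = 1 := by simp [show Iic 0 = {0} from rfl]
    rw [hd, sum_eq_one, Nat.cast_zero, Nat.cast_one, zero_mul, mul_zero, one_mul] at packing
    rw [hd, pow_zero]
    exact sub_nonpos.mp (nonpos_of_mul_nonpos_left packing hδ)
  obtain ⟨n, hn0, le_n, sum_choose_le⟩ :=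
    exists_four_mul_le_and_sum_choose_le hd ((one_le_div hδ).mpr hδX)
  rw [← mul_div_assoc, div_le_iff₀ hδ] at le_n
  calc (#𝒜 : ℝ) ≤ 2 * ∑ k ∈ Iic 𝒜.vcDim, (n.choose k : ℝ) :=
        card_le_two_mul_sum_choose hδ hX h𝒜 hsep hn0 le_n
    _ ≤ 2 ^ 𝒜.vcDim * (15 * (#X / δ)) ^ 𝒜.vcDim := by
        gcongr
        exact le_self_pow₀ one_le_two hd.ne'
    _ = (30 * (#X / δ)) ^ 𝒜.vcDim := by
        rw [← mul_pow, ← mul_assoc]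
        norm_num

end Packing

section SetFamily

variable {α : Type*} {F : Set (Set α)}

theorem natCast_finset_vcDim_le [DecidableEq α] {𝒜 : Finset (Finset α)}
    (h𝒜 : ∀ t ∈ 𝒜, (t : Set α) ∈ F) : (𝒜.vcDim : ℕ∞) ≤ vcDim F := by
  have natCast_le_of_shatters (S : Finset α) (hS : S ∈ 𝒜.shatterer) :
      (S.card : ℕ∞) ≤ vcDim F := by
    refine le_iSup₂_of_le S (fun T hT => ?_) le_rfl
    lift T to Finset α using S.finite_toSet.subset hT
    obtain ⟨t, ht, hSt⟩ := Finset.mem_shatterer.mp hS (Finset.coe_subset.mp hT)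
    exact ⟨t, h𝒜 t ht, by rw [← Finset.coe_inter, hSt]⟩
  refine Finset.sup_induction (p := fun k : ℕ => (k : ℕ∞) ≤ vcDim F) zero_le
    (fun k hk l hl => ?_) natCast_le_of_shatters
  rcases max_choice k l with h | h <;> simpa only [h]

theorem card_le_of_pairwise_le_ncard_symmDiff {d : ℕ} (hF : vcDim F ≤ d) {X : Set α}
    (hX : X.Finite) {δ : ℝ} (hδ : 0 < δ) (hδX : δ ≤ X.ncard) {ι : Type*} {I : Finset ι}
    {f : ι → Set α} (hfF : ∀ i ∈ I, f i ∈ F) (hfX : ∀ i ∈ I, f i ⊆ X)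
    (hsep : (I : Set ι).Pairwise fun i j => δ ≤ (f i ∆ f j).ncard) :
    (I.card : ℝ) ≤ (30 * (X.ncard / δ)) ^ d := by
  classical
  lift X to Finset α using hX
  rw [Set.ncard_coe_finset] at hδX ⊢
  set g : ι → Finset α := fun i => {x ∈ X | x ∈ f i}
  have coe_g {i : ι} (hi : i ∈ I) : (g i : Set α) = f i := by
    rw [Finset.coe_filter]
    exact Set.inter_eq_self_of_subset_right (hfX i hi)
  have g_sep : (I : Set ι).Pairwise fun i j => δ ≤ (g i ∆ g j).card := by
    intro i hi j hj hij
    rw [← Set.ncard_coe_finset, Finset.coe_symmDiff, coe_g hi, coe_g hj]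
    exact hsep hi hj hij
  have g_injOn : Set.InjOn g I := by
    intro i hi j hj hij
    by_contra hne
    have h : δ ≤ (g i ∆ g j).card := g_sep hi hj hne
    rw [hij, symmDiff_self, Finset.bot_eq_empty, Finset.card_empty, Nat.cast_zero] at h
    exact hδ.not_ge h
  have vcDim_le : (I.image g).vcDim ≤ d := by
    refine Nat.cast_le.mp ((natCast_finset_vcDim_le (F := F) ?_).trans hF)
    simpa only [Finset.forall_mem_image] using fun i hi => (coe_g hi).symm ▸ hfF i hi
  rw [← Finset.card_image_of_injOn g_injOn]
  refine (card_le_of_pairwise_le_card_symmDiff hδ hδX ?_ ?_).trans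
    (pow_le_pow_right₀ ?_ vcDim_le)
  · simpa only [Finset.forall_mem_image] using fun i _ => Finset.filter_subset _ X
  · rw [Finset.coe_image]
    exact g_injOn.pairwise_image.mpr g_sep
  · linarith [(one_le_div hδ).mpr hδX]

end SetFamily

section Stabilizer

variable {G : Type*} [Group G] {A : Set G} {N δ : ℝ}

theorem ncard_smul_symmDiff_smul (x y : G) (A : Set G) :
    ((x • A) ∆ (y • A)).ncard = (((y⁻¹ * x) • A) ∆ A).ncard := by
  rw [mul_smul, ← Set.ncard_smul_set y⁻¹, Set.smul_set_symmDiff, inv_smul_smul]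

theorem mem_stabL {x : G} : x ∈ stabL A N ↔ (((x • A) ∆ A).ncard : ℝ) ≤ N := Iff.rfl

theorem inv_stabL (A : Set G) (N : ℝ) : (stabL A N)⁻¹ = stabL A N := by
  ext x
  have h := ncard_smul_symmDiff_smul 1 x A
  rw [one_smul, mul_one, symmDiff_comm] at h
  rw [Set.mem_inv, mem_stabL, mem_stabL, h]

theorem one_mem_stabL (hN : 0 ≤ N) : (1 : G) ∈ stabL A N := by
  rwa [mem_stabL, one_smul, symmDiff_self, Set.bot_eq_empty, Set.ncard_empty, Nat.cast_zero]

theorem stabL_mono : Monotone (stabL A) := fun _ _ h _ hx => le_trans hx h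

theorem stabL_mul_stabL_subset (hA : A.Finite) (M N : ℝ) :
    stabL A M * stabL A N ⊆ stabL A (M + N) := by
  rintro _ ⟨x, hx, y, hy, rfl⟩
  have triangle : (((x * y) • A) ∆ A).ncard ≤ ((y • A) ∆ A).ncard + ((x • A) ∆ A).ncard :=
    calc (((x * y) • A) ∆ A).ncard
        ≤ (((x * y) • A) ∆ (x • A) ∪ (x • A) ∆ A).ncard :=
          Set.ncard_le_ncard (symmDiff_triangle _ _ _)
            ((hA.smul_set.symmDiff hA.smul_set).union (hA.smul_set.symmDiff hA))
      _ ≤ (((x * y) • A) ∆ (x • A)).ncard + ((x • A) ∆ A).ncard := Set.ncard_union_le _ _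
      _ = ((y • A) ∆ A).ncard + ((x • A) ∆ A).ncard := by
          rw [ncard_smul_symmDiff_smul, inv_mul_cancel_left]
  calc ((((x * y) • A) ∆ A).ncard : ℝ) ≤ ((y • A) ∆ A).ncard + ((x • A) ∆ A).ncard := by
        exact_mod_cast triangle
    _ ≤ M + N := by
        rw [add_comm]
        exact add_le_add hx hy

theorem stabL_pow_subset (hA : A.Finite) (N : ℝ) (j : ℕ) : stabL A N ^ j ⊆ stabL A (j * N) := by
  induction j with
  | zero => simpa using one_mem_stabL le_rfl
  | succ j ih =>
    rw [pow_succ, Nat.cast_succ, add_one_mul]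
    exact (Set.mul_subset_mul_right ih).trans (stabL_mul_stabL_subset hA _ _)

theorem stabL_subset_mul_inv (hA : A.Finite) (hN : N < 2 * A.ncard) : stabL A N ⊆ A * A⁻¹ := by
  intro x hx
  obtain ⟨_, ⟨a, ha, rfl⟩, hxa⟩ : ((x • A) ∩ A).Nonempty := by
    rw [← Set.not_disjoint_iff_nonempty_inter]
    intro hdisj
    have symmDiff_eq_union : (x • A) ∆ A = x • A ∪ A := hdisj.symmDiff_eq_sup
    rw [mem_stabL, symmDiff_eq_union, Set.ncard_union_eq hdisj hA.smul_set hA,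
      Set.ncard_smul_set, Nat.cast_add] at hx
    linarith
  exact ⟨x • a, hxa, a⁻¹, Set.inv_mem_inv.mpr ha, by simp⟩

theorem one_mem_stL (hδ : 0 ≤ δ) : (1 : G) ∈ stL A δ := one_mem_stabL (by positivity)

theorem stL_pow_subset (hA : A.Finite) {j : ℕ} {ε : ℝ} (h : j * δ ≤ ε) :
    stL A δ ^ j ⊆ stL A ε := by
  refine (stabL_pow_subset hA _ j).trans (stabL_mono ?_)
  rw [← mul_assoc]
  gcongr

theorem stL_subset_mul_inv (hA : A.Finite) (hAne : A.Nonempty) (hδ : δ < 2) :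
    stL A δ ⊆ A * A⁻¹ :=
  stabL_subset_mul_inv hA (mul_lt_mul_of_pos_right hδ (Nat.cast_pos.mpr (hAne.ncard_pos hA)))

theorem finite_stL (hA : A.Finite) (hAne : A.Nonempty) (hδ : δ < 2) : (stL A δ).Finite :=
  (hA.mul hA.inv).subset (stL_subset_mul_inv hA hAne hδ)

theorem one_le_ncard_stL (hA : A.Finite) (hAne : A.Nonempty) (hδ0 : 0 ≤ δ) (hδ : δ < 2) :
    1 ≤ (stL A δ).ncard :=
  (Set.ncard_pos (finite_stL hA hAne hδ)).mpr ⟨1, one_mem_stL hδ0⟩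

theorem ncard_stL_pow_le (hA : A.Finite) (hAne : A.Nonempty) {j : ℕ} {ε : ℝ} (h : j * δ ≤ ε)
    (hε : ε < 2) : (stL A δ ^ j).ncard ≤ (stL A ε).ncard :=
  Set.ncard_le_ncard (stL_pow_subset hA h) (finite_stL hA hAne hε)

theorem exists_subset_mul_of_pairwise_mul_inv_notMem {S : Set G} (hS1 : 1 ∈ S) (hS : S⁻¹ = S)
    (A : Finset G) :
    ∃ F ⊆ A, ((F : Set G).Pairwise fun a b => a * b⁻¹ ∉ S) ∧ (A : Set G) ⊆ S * (F : Set G) := by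
  classical
  obtain ⟨F, hF⟩ := Finset.exists_maximal
    (s := A.powerset.filter fun F : Finset G => (F : Set G).Pairwise fun a b => a * b⁻¹ ∉ S)
    ⟨∅, by simp⟩
  obtain ⟨hFA, hsep⟩ := Finset.mem_filter.mp hF.prop
  rw [Finset.mem_powerset] at hFA
  refine ⟨F, hFA, hsep, fun a ha => ?_⟩
  by_contra haSF
  have notMem_of_mem (b : G) (hb : b ∈ F) : a * b⁻¹ ∉ S := fun h =>
    haSF ⟨a * b⁻¹, h, b, hb, inv_mul_cancel_right a b⟩
  refine haSF ⟨1, hS1, a, hF.le_of_ge ?_ (Finset.subset_insert a F) (Finset.mem_insert_self a F),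
    one_mul a⟩
  rw [Finset.mem_filter, Finset.mem_powerset, Finset.coe_insert]
  refine ⟨Finset.insert_subset ha hFA, hsep.insert fun b hb _ => ⟨notMem_of_mem b hb, ?_⟩⟩
  rw [← hS, Set.mem_inv, mul_inv_rev, inv_inv]
  exact notMem_of_mem b hb

theorem ncard_le_pow_mul_ncard_stL (hA : A.Finite) (hAne : A.Nonempty) {d : ℕ}
    (hd : vcDim (leftFam A A⁻¹) ≤ d) (hδ0 : 0 < δ) (hδ1 : δ ≤ 1) :
    (A.ncard : ℝ) ≤ (30 * (((A⁻¹ * A).ncard : ℝ) / A.ncard) / δ) ^ d * (stL A δ).ncard := by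
  have hA0 : (0 : ℝ) < A.ncard := Nat.cast_pos.mpr (hAne.ncard_pos hA)
  have hXfin : (A⁻¹ * A).Finite := hA.inv.mul hA
  have smul_subset {a : G} (ha : a ∈ A) : a⁻¹ • A ⊆ A⁻¹ * A :=
    Set.smul_set_subset_mul (Set.inv_mem_inv.mpr ha)
  obtain ⟨F, hFA, hsep, hcover⟩ := exists_subset_mul_of_pairwise_mul_inv_notMem
    (S := stL A δ) (one_mem_stL hδ0.le) (inv_stabL A _) hA.toFinset
  rw [hA.coe_toFinset] at hcover
  have mem_A {a : G} (ha : a ∈ F) : a ∈ A := hA.mem_toFinset.mp (hFA ha)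
  have card_F_le : (F.card : ℝ) ≤ (30 * ((A⁻¹ * A).ncard / (δ * A.ncard))) ^ d := by
    refine card_le_of_pairwise_le_ncard_symmDiff hd hXfin (f := fun a => a⁻¹ • A)
      (mul_pos hδ0 hA0) ?_ (fun a ha => ⟨a⁻¹, Set.inv_mem_inv.mpr (mem_A ha), rfl⟩)
      (fun a ha => smul_subset (mem_A ha)) fun a ha b hb hab => ?_
    · obtain ⟨a, ha⟩ := hAne
      have h := Set.ncard_le_ncard (smul_subset ha) hXfin
      rw [Set.ncard_smul_set] at h
      exact (mul_le_of_le_one_left hA0.le hδ1).trans (Nat.cast_le.mpr h)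
    · beta_reduce
      rw [ncard_smul_symmDiff_smul, inv_inv]
      exact (not_le.mp (hsep hb ha hab.symm)).le
  have ncard_A_le : A.ncard ≤ (stL A δ).ncard * F.card := by
    refine (Set.ncard_le_ncard hcover ((finite_stL hA hAne (by linarith)).mul
      F.finite_toSet)).trans ?_
    simpa only [Nat.card_coe_set_eq, Set.ncard_coe_finset] using
      Set.natCard_mul_le (s := stL A δ) (t := F)
  calc (A.ncard : ℝ) ≤ F.card * (stL A δ).ncard := by
        rw [mul_comm]
        exact_mod_cast ncard_A_le
    _ ≤ (30 * (((A⁻¹ * A).ncard : ℝ) / A.ncard) / δ) ^ d * (stL A δ).ncard := by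
        rw [mul_div_assoc, div_div, mul_comm _ δ]
        gcongr

end Stabilizer

section Scales

theorem exists_le_mul_succ_and_pow_mul_le {R : Type*} [Field R] [LinearOrder R]
    [IsStrictOrderedRing R] [Archimedean R] {p : ℕ → R} {c K : R} (hK : 1 < K) (hc : 0 < c)
    (hp : ∀ t, c ≤ p t) : ∃ t, p t ≤ K * p (t + 1) ∧ K ^ t * p t ≤ p 0 := by
  have pow_mul_le (t : ℕ) (ht : ∀ i < t, K * p (i + 1) < p i) : K ^ t * p t ≤ p 0 := by
    induction t with
    | zero => rw [pow_zero, one_mul]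
    | succ t ih =>
      calc K ^ (t + 1) * p (t + 1) = K ^ t * (K * p (t + 1)) := by rw [pow_succ, mul_assoc]
        _ ≤ K ^ t * p t := by
            gcongr
            exact (ht t t.lt_succ_self).le
        _ ≤ p 0 := ih fun i hi => ht i (hi.trans t.lt_succ_self)
  have exists_scale : ∃ t, p t ≤ K * p (t + 1) := by
    by_contra! hdecay
    obtain ⟨t, ht⟩ := pow_unbounded_of_one_lt (p 0 / c) hK
    rw [div_lt_iff₀ hc] at ht
    have hpt : K ^ t * c ≤ K ^ t * p t := by
      gcongr
      exact hp t
    exact (hpt.trans (pow_mul_le t fun i _ => hdecay i)).not_gt ht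
  classical
  exact ⟨Nat.find exists_scale, Nat.find_spec exists_scale,
    pow_mul_le _ fun i hi => not_le.mp (Nat.find_min exists_scale hi)⟩

theorem pow_mul_le_rpow_inv_mul {u m Y a p : ℝ} {d t : ℕ} (hu : 0 < u) (hm : 0 ≤ m) (hY : 0 ≤ Y)
    (ha : 0 < a) (hd : d ≠ 0) (a_le : a ≤ (Y * u ^ t) ^ d * p)
    (p_le : (u ^ (d * (d + 1))) ^ t * p ≤ m * a) :
    u ^ (t * d) ≤ m ^ (d : ℝ)⁻¹ * Y := by
  refine le_of_pow_le_pow_left₀ hd (by positivity) ?_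
  rw [mul_pow, Real.rpow_inv_natCast_pow hm hd]
  refine le_of_mul_le_mul_right ?_ (by positivity : 0 < (u ^ t) ^ d * a)
  calc (u ^ (t * d)) ^ d * ((u ^ t) ^ d * a) = (u ^ (d * (d + 1))) ^ t * a := by ring
    _ ≤ (u ^ (d * (d + 1))) ^ t * ((Y * u ^ t) ^ d * p) := by gcongr
    _ = (Y * u ^ t) ^ d * ((u ^ (d * (d + 1))) ^ t * p) := mul_left_comm _ _ _
    _ ≤ (Y * u ^ t) ^ d * (m * a) := by gcongr
    _ = m * Y ^ d * ((u ^ t) ^ d * a) := by ring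

theorem le_mul_pow_succ_mul {u M Y a p : ℝ} {d t : ℕ} (hu : 1 ≤ u) (hM : 0 ≤ M) (hY : 0 ≤ Y)
    (hp : 0 ≤ p) (a_le : a ≤ (Y * u ^ (t + 1)) ^ d * p) (u_pow_le : u ^ (t * d) ≤ M * Y) :
    a ≤ M * (Y * u) ^ (d + 1) * p :=
  calc a ≤ (Y * u ^ (t + 1)) ^ d * p := a_le
    _ = (Y * u) ^ d * u ^ (t * d) * p := by ring
    _ ≤ (Y * u) ^ d * (M * Y) * p := by gcongr
    _ ≤ (Y * u) ^ d * (M * (Y * u)) * p := by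
        gcongr
        exact le_mul_of_one_le_right hY hu
    _ = M * (Y * u) ^ (d + 1) * p := by ring

variable {G : Type*} [Group G] {A : Set G}

theorem exists_scale_ncard_stL_le (hA : A.Finite) (hAne : A.Nonempty) {d u : ℕ} (hd0 : d ≠ 0)
    (hd : vcDim (leftFam A A⁻¹) ≤ d) (hu : 2 ≤ u) {η : ℝ} (hη0 : 0 < η) (hη1 : η ≤ 1) :
    ∃ t : ℕ,
      ((stL A (η / u ^ t)).ncard : ℝ) ≤
        (u : ℝ) ^ (d * (d + 1)) * (stL A (η / u ^ (t + 1))).ncard ∧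
      (A.ncard : ℝ) ≤ (((A * A⁻¹).ncard : ℝ) / A.ncard) ^ (d : ℝ)⁻¹ *
        (30 * (((A⁻¹ * A).ncard : ℝ) / A.ncard) * u / η) ^ (d + 1) *
          (stL A (η / u ^ (t + 1))).ncard := by
  have hA0 : (0 : ℝ) < A.ncard := Nat.cast_pos.mpr (hAne.ncard_pos hA)
  have hu1 : (1 : ℝ) < u := Nat.one_lt_cast.mpr hu
  set m : ℝ := ((A * A⁻¹).ncard : ℝ) / A.ncard with hm
  set k : ℝ := ((A⁻¹ * A).ncard : ℝ) / A.ncard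
  set Y : ℝ := 30 * k / η
  set p : ℕ → ℝ := fun t => (stL A (η / u ^ t)).ncard
  have scale_le_one (t : ℕ) : η / u ^ t ≤ 1 :=
    (div_le_self hη0.le (one_le_pow₀ hu1.le)).trans hη1
  have one_le_p (t : ℕ) : 1 ≤ p t := Nat.one_le_cast.mpr <|
    one_le_ncard_stL hA hAne (by positivity) (by linarith [scale_le_one t])
  have p_zero_le : p 0 ≤ m * A.ncard := by
    rw [hm, div_mul_cancel₀ _ hA0.ne']
    exact Nat.cast_le.mpr (Set.ncard_le_ncard
      (stL_subset_mul_inv hA hAne (by linarith [scale_le_one 0])) (hA.mul hA.inv))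
  have ncard_A_le (t : ℕ) : A.ncard ≤ (Y * u ^ t) ^ d * p t := by
    rw [div_mul_eq_mul_div, ← div_div_eq_mul_div]
    exact ncard_le_pow_mul_ncard_stL hA hAne hd (by positivity) (scale_le_one t)
  have hK : 1 < (u : ℝ) ^ (d * (d + 1)) := one_lt_pow₀ hu1 (by positivity)
  obtain ⟨t, p_le, pow_mul_p_le⟩ := exists_le_mul_succ_and_pow_mul_le hK one_pos one_le_p
  refine ⟨t, p_le, ?_⟩
  rw [mul_div_right_comm]
  exact le_mul_pow_succ_mul hu1.le (by positivity) (by positivity) (Nat.cast_nonneg _)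
    (ncard_A_le (t + 1)) (pow_mul_le_rpow_inv_mul (by positivity) (by positivity) (by positivity)
      hA0 hd0 (ncard_A_le t) (pow_mul_p_le.trans p_zero_le))

end Scales

/-- Lemma 5.1 of the paper, case (2): with `d = VC^ℓ_{A⁻¹}(A) ≥ 1`,
`k = |A⁻¹A|/|A|` and `m = |AA⁻¹|/|A|`, for integers `n ≥ u ≥ 2` and `ε ∈ (0,1)` there is a
symmetric `B` with `|B^u| ≤ u^{d(d+1)}|B|`, `B^n ⊆ St^ℓ_ε(A)`, and
`|A| ≤ m^{1/d}(30kn/ε)^{d+1}|B|`. -/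
theorem afz_trick' {G : Type*} [Group G] (A : Set G)
    (hA : A.Finite) (hAne : A.Nonempty)
    (d : ℕ) (hd : vcDim (leftFam A A⁻¹) = (d : ℕ∞)) (hd1 : 1 ≤ d)
    (n u : ℕ) (hu : 2 ≤ u) (hun : u ≤ n)
    (ε : ℝ) (hε0 : 0 < ε) (hε1 : ε < 1) :
    ∃ B : Set G, B.Finite ∧ B⁻¹ = B ∧ (1 : G) ∈ B ∧
      ((B ^ u).ncard : ℝ) ≤ (u : ℝ) ^ (d * (d + 1)) * B.ncard ∧
      B ^ n ⊆ stL A ε ∧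
      (A.ncard : ℝ) ≤ (((A * A⁻¹).ncard : ℝ) / A.ncard) ^ ((d : ℝ)⁻¹) *
        (30 * (((A⁻¹ * A).ncard : ℝ) / A.ncard) * n / ε) ^ (d + 1) * B.ncard := by
  have hu1 : (1 : ℝ) ≤ u := Nat.one_le_cast.mpr (by lia)
  have hn0 : (0 : ℝ) < n := Nat.cast_pos.mpr (by lia)
  obtain ⟨η, hη⟩ : ∃ η : ℝ, η = ε * (u / n) := ⟨_, rfl⟩
  have hη0 : 0 < η := by rw [hη]; positivity
  have hη1 : η ≤ 1 :=
    hη ▸ mul_le_one₀ hε1.le (by positivity) (div_le_one_of_le₀ (Nat.cast_le.mpr hun) hn0.le)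
  have scale_lt_two (t : ℕ) : η / u ^ t < 2 := by
    linarith [div_le_self hη0.le (one_le_pow₀ hu1 : 1 ≤ (u : ℝ) ^ t)]
  obtain ⟨t, growth_le, size_le⟩ := exists_scale_ncard_stL_le hA hAne (by lia) hd.le hu hη0 hη1
  have mul_u_eq : u * (η / u ^ (t + 1)) = η / u ^ t := by rw [pow_succ]; field_simp
  have mul_n_eq : n * (η / u ^ (t + 1)) = ε / u ^ t := by rw [hη, pow_succ]; field_simp
  have div_η_eq : u / η = n / ε := by rw [hη]; field_simp
  rw [mul_div_assoc _ (u : ℝ), div_η_eq, ← mul_div_assoc] at size_le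
  exact ⟨stL A (η / u ^ (t + 1)), finite_stL hA hAne (scale_lt_two _), inv_stabL _ _,
    one_mem_stL (by positivity),
    growth_le.trans' (Nat.cast_le.mpr (ncard_stL_pow_le hA hAne mul_u_eq.le (scale_lt_two t))),
    stL_pow_subset hA (mul_n_eq.trans_le (div_le_self hε0.le (one_le_pow₀ hu1))), size_le⟩
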